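/- The Ad-action of SL(2,ℝ) on the pseudosphere S²₁ is transitive: for every 2×2 real matrix X with trace 0 and det X = −1 (the matrix form of a point of the pseudosphere S²₁ = {x ∈ 𝔼³₁ : ⟨x,x⟩ = 1}), there exists h ∈ SL(2,ℝ) (det h = 1) such that X = h·k'·h⁻¹, where k' = [[1,0],[0,−1]]. Hence S²₁ is identified with the homogeneous space SL(2,ℝ)/SO(1,1) = {h k' h⁻¹ : h ∈ SL(2,ℝ)}. -/

import Mathlib

noncomputable section

/-! The characteristic polynomial of `X` is `t² - 1`, with the distinct roots `1` and `-1`, so the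
matrix `P` of eigenvectors is invertible and conjugates `X` to `k'`. Multiplying one eigenvector by
`(det P)⁻¹` keeps it an eigenvector and brings the conjugating matrix into `SL(2)`. -/

open Matrix Module.End

section Conjugation

variable {n R : Type*} [Fintype n] [DecidableEq n]

theorem mul_eq_mul_diagonal_iff {m : Type*} [Fintype m] [CommSemiring R]
    {A : Matrix m m R} {P : Matrix m n R} {μ : n → R} :
    A * P = P * diagonal μ ↔ ∀ j, A *ᵥ P.col j = μ j • P.col j := by
  simp only [← Matrix.ext_iff, funext_iff, mul_diagonal, Pi.smul_apply, smul_eq_mul, col_apply,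
    mul_comm (μ _)]
  exact forall_comm

variable [CommRing R]

theorem exists_det_diagonal_eq [Nonempty n] (c : R) :
    ∃ d : n → R, (diagonal d).det = c :=
  ⟨Pi.mulSingle (Classical.arbitrary n) c, by
    rw [det_diagonal, Fintype.prod_pi_mulSingle']⟩

theorem exists_det_eq_one_mul_eq_mul_diagonal {A P : Matrix n n R} {μ : n → R}
    (hP : IsUnit P.det) (hAP : A * P = P * diagonal μ) :
    ∃ h : Matrix n n R, h.det = 1 ∧ A * h = h * diagonal μ := by
  cases isEmpty_or_nonempty n
  · exact ⟨P, det_isEmpty, hAP⟩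
  obtain ⟨d, hd⟩ := exists_det_diagonal_eq (n := n) (Ring.inverse P.det)
  refine ⟨P * diagonal d, by rw [det_mul, hd, Ring.mul_inverse_cancel _ hP], ?_⟩
  rw [← mul_assoc, hAP, mul_assoc, mul_assoc, (commute_diagonal μ d).eq]

end Conjugation

section Eigenvectors

variable {n K : Type*} [Fintype n] [DecidableEq n] [Field K]

theorem exists_isUnit_det_mul_eq_mul_diagonal {A : Matrix n n K} {μ : n → K}
    (hμ : Function.Injective μ) (hA : ∀ i, HasEigenvalue (toLin' A) (μ i)) :
    ∃ P : Matrix n n K, IsUnit P.det ∧ A * P = P * diagonal μ := by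
  choose v hv using fun i ↦ (hA i).exists_hasEigenvector
  have hv_indep : LinearIndependent K v := eigenvectors_linearIndependent' _ μ hμ v hv
  refine ⟨(of v)ᵀ, ?_, mul_eq_mul_diagonal_iff.2 fun i ↦ (hv i).apply_eq_smul⟩
  rw [← isUnit_iff_isUnit_det, ← linearIndependent_cols_iff_isUnit]
  exact hv_indep

theorem exists_det_eq_one_eq_conj_diagonal {A : Matrix n n K} {μ : n → K}
    (hμ : Function.Injective μ) (hA : ∀ i, HasEigenvalue (toLin' A) (μ i)) :
    ∃ h : Matrix n n K, h.det = 1 ∧ A = h * diagonal μ * h⁻¹ := by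
  obtain ⟨P, hP, hAP⟩ := exists_isUnit_det_mul_eq_mul_diagonal hμ hA
  obtain ⟨h, hdet, hAh⟩ := exists_det_eq_one_mul_eq_mul_diagonal hP hAP
  refine ⟨h, hdet, ?_⟩
  rw [← hAh, mul_nonsing_inv_cancel_right _ _ (hdet ▸ isUnit_one)]

end Eigenvectors

theorem hasEigenvalue_toLin'_fin_two_iff {R : Type*} [CommRing R] [IsDomain R]
    {A : Matrix (Fin 2) (Fin 2) R} {μ : R} :
    HasEigenvalue (toLin' A) μ ↔ μ ^ 2 - A.trace * μ + A.det = 0 := by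
  simp [hasEigenvalue_iff_isRoot_charpoly, charpoly_toLin', charpoly_fin_two, Polynomial.IsRoot]

theorem ad_action_transitive_on_pseudosphere_general {K : Type*} [Field K] [NeZero (2 : K)]
    (X : Matrix (Fin 2) (Fin 2) K) (htr : X.trace = 0) (hdet : X.det = -1) :
    ∃ h : Matrix (Fin 2) (Fin 2) K, h.det = 1 ∧ X = h * !![(1 : K), 0; 0, -1] * h⁻¹ := by
  have one_ne_neg_one : (1 : K) ≠ -1 := fun h ↦ two_ne_zero (α := K) (by linear_combination h)
  have eigenvalues_injective : Function.Injective ![(1 : K), -1] :=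
    injective_pair_iff_ne.2 one_ne_neg_one
  have hasEigenvalue_X : ∀ i, HasEigenvalue (toLin' X) (![1, -1] i) := by
    simp [Fin.forall_fin_two, hasEigenvalue_toLin'_fin_two_iff, htr, hdet]
  rw [← diagonal_vec2]
  exact exists_det_eq_one_eq_conj_diagonal eigenvalues_injective hasEigenvalue_X

/-- The Ad-action of `SL(2,ℝ)` on the pseudosphere `S²₁` is transitive: every trace-zero
`2×2` real matrix `X` with `det X = −1` (i.e. a point of `S²₁` in matrix form) is of the
form `h k' h⁻¹` with `h ∈ SL(2,ℝ)` and `k' = [[1,0],[0,−1]]`. -/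
theorem ad_action_transitive_on_pseudosphere (X : Matrix (Fin 2) (Fin 2) ℝ)
    (htr : X.trace = 0) (hdet : X.det = -1) :
    ∃ h : Matrix (Fin 2) (Fin 2) ℝ, h.det = 1 ∧
      X = h * !![(1 : ℝ), 0; 0, -1] * h⁻¹ :=
  ad_action_transitive_on_pseudosphere_general X htr hdet
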